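/- Let a, b ≥ 0 be integers. Let f, g ∈ S be homogeneous of degree a+1 with no common zeros along Y, and let p, q ∈ S be homogeneous of degrees b and 3a+b+2 with no common zeros along Y. Let α, β, γ ∈ S be homogeneous polynomials with q ≡ α·f² + β·fg + γ·g² (mod (x,y)). Set I_Z = (x², xy, y², xg − yf). Then there is a (necessarily unique) S-module homomorphism u : I_Z → S/(x,y) with u(x²) = pf² + (x,y), u(xy) = pfg + (x,y), u(y²) = pg² + (x,y), u(xg−yf) = q + (x,y), and the kernel of u is exactly the ideal (x³, x²y, xy², y³, x(xg−yf), y(xg−yf), α·x² + β·xy + γ·y² − p(xg−yf)). (This kernel is the saturated ideal of a quasiprimitive triple line of type (a,b) on Y.) -/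

import Mathlib

open MvPolynomial

/-- The pair `(f, g)` has no common zeros along the line `Y = {x = y = 0}`. -/
def NoCommonZerosAlongY {k : Type*} [Field k] (f g : MvPolynomial (Fin 4) k) : Prop :=
  ∀ c d : k, (c, d) ≠ (0, 0) → eval ![0, 0, c, d] f ≠ 0 ∨ eval ![0, 0, c, d] g ≠ 0

/-! The ideal `J = (x, y)` annihilates `S/J`, so a map `u : I_Z → S/J` is a choice of four values
that respects the syzygies of `x², xy, y², h = xg − yf`. Modulo `J` each of these syzygies is
`(a, b, c, 0)` with `a f² + b fg + c g² = 0`, so the values `(pf², pfg, pg², q)` are admissible.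

If `u (a x² + b xy + c y² + d h) = 0`, coprimality of `p` and `q` on `Y` gives `e` with `d ≡ -e p`
and `(a - eα) f² + (b - eβ) fg + (c - eγ) g² ≡ 0`. Coprimality of `f` and `g` then makes this
residual a combination of `g x² - f xy = x h` and `g xy - f y² = y h`. Hence the kernel is `J I_Z`
plus the multiples of `α x² + β xy + γ y² - p h`. -/

section KoszulRegular

variable {R T : Type*} [CommRing R] [CommRing T]

/-- The pair `(x, y)` is Koszul-regular: its Koszul complex `0 → R → R² → R` has no homology except
possibly in degree zero. -/
structure IsKoszulRegular (x y : R) : Prop where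
  eq_zero_of_mul_eq_zero : ∀ ⦃r : R⦄, r * x = 0 → r * y = 0 → r = 0
  exists_of_mul_add_mul_eq_zero :
    ∀ ⦃s t : R⦄, s * x + t * y = 0 → ∃ r, s = r * y ∧ t = -(r * x)

namespace IsKoszulRegular

variable {x y : R}

theorem of_isRelPrime [IsDomain R] [DecompositionMonoid R] (h : IsRelPrime x y) :
    IsKoszulRegular x y where
  eq_zero_of_mul_eq_zero r hx hy := by
    by_contra hr
    obtain rfl : x = 0 := (mul_eq_zero.1 hx).resolve_left hr
    obtain rfl : y = 0 := (mul_eq_zero.1 hy).resolve_left hr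
    exact not_isRelPrime_zero_zero h
  exists_of_mul_add_mul_eq_zero s t hst := by
    rcases eq_or_ne x 0 with rfl | hx
    · obtain ⟨v, hv⟩ := (isRelPrime_zero_left.1 h).exists_left_inv
      exact ⟨s * v, by linear_combination -s * hv, by linear_combination v * hst - t * hv⟩
    · obtain ⟨r, rfl⟩ : x ∣ t :=
        h.dvd_of_dvd_mul_right ⟨-s, by linear_combination hst⟩
      exact ⟨-r, mul_left_cancel₀ hx (by linear_combination hst), by ring⟩

theorem of_ringEquiv (e : R ≃+* T) (h : IsKoszulRegular (e x) (e y)) : IsKoszulRegular x y where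
  eq_zero_of_mul_eq_zero r hx hy :=
    e.map_eq_zero_iff.1 <|
      h.eq_zero_of_mul_eq_zero (by simp [← map_mul, hx]) (by simp [← map_mul, hy])
  exists_of_mul_add_mul_eq_zero s t hst := by
    obtain ⟨r, hs, ht⟩ := h.exists_of_mul_add_mul_eq_zero (s := e s) (t := e t)
      (by rw [← map_mul, ← map_mul, ← map_add, hst, map_zero])
    exact ⟨e.symm r, e.injective (by simpa using hs), e.injective (by simpa using ht)⟩

theorem exists_of_quadratic_eq_zero (h : IsKoszulRegular x y) {a b c : R}
    (habc : a * x ^ 2 + b * (x * y) + c * y ^ 2 = 0) :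
    ∃ s t, a = s * y ∧ b = t * y - s * x ∧ c = -(t * x) := by
  obtain ⟨r, hr, hcy⟩ := h.exists_of_mul_add_mul_eq_zero (s := a * x + b * y) (t := c * y)
    (by linear_combination habc)
  obtain ⟨s, ha, hb⟩ := h.exists_of_mul_add_mul_eq_zero (s := a) (t := b - r)
    (by linear_combination hr)
  obtain ⟨t, rfl, hc⟩ := h.exists_of_mul_add_mul_eq_zero (s := r) (t := c)
    (by linear_combination hcy)
  exact ⟨s, t, ha, by linear_combination hb, hc⟩

theorem exists_of_mul_quadratic_add_mul_eq_zero {f g p q α β γ a b c d : R}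
    (hfg : IsKoszulRegular f g) (hpq : IsKoszulRegular p q)
    (hq : q = α * f ^ 2 + β * (f * g) + γ * g ^ 2)
    (h : p * (a * f ^ 2 + b * (f * g) + c * g ^ 2) + d * q = 0) :
    ∃ e s t, a = e * α + s * g ∧ b = e * β + (t * g - s * f) ∧ c = e * γ - t * f ∧
      d = -(e * p) := by
  obtain ⟨e, habc, hd⟩ := hpq.exists_of_mul_add_mul_eq_zero
    (s := a * f ^ 2 + b * (f * g) + c * g ^ 2) (t := d) (by linear_combination h)
  obtain ⟨s, t, ha, hb, hc⟩ := hfg.exists_of_quadratic_eq_zero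
    (a := a - e * α) (b := b - e * β) (c := c - e * γ) (by linear_combination habc + e * hq)
  exact ⟨e, s, t, by linear_combination ha, by linear_combination hb, by linear_combination hc, hd⟩

end IsKoszulRegular

end KoszulRegular

theorem exists_linearMap_of_ker_linearCombination_le {R M N ι : Type*} [Ring R] [AddCommGroup M]
    [Module R M] [AddCommGroup N] [Module R N] [Fintype ι] {v : ι → N} {w : ι → M}
    (hv : Submodule.span R (Set.range v) = ⊤)
    (h : LinearMap.ker (Fintype.linearCombination R v) ≤
      LinearMap.ker (Fintype.linearCombination R w)) :
    ∃ u : N →ₗ[R] M, ∀ i, u (v i) = w i := by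
  classical
  have hsurj : Function.Surjective (Fintype.linearCombination R v) :=
    LinearMap.range_eq_top.1 ((Fintype.range_linearCombination R v).trans hv)
  let e := (Fintype.linearCombination R v).quotKerEquivOfSurjective hsurj
  refine ⟨(LinearMap.ker _).liftQ (Fintype.linearCombination R w) h ∘ₗ e.symm, fun i ↦ ?_⟩
  have hi : e.symm (v i) = Submodule.Quotient.mk (Pi.single i 1) :=
    e.symm_apply_eq.2 (by simp [e])
  simp [hi]

section TripleLine

variable {R : Type*} [CommRing R] {x y f g p q α β γ : R}

/-- The ideal `I_Z` of the double line on `Y = {x = y = 0}` cut out to first order by `xg - yf`. -/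
abbrev doubleLineIdeal (x y f g : R) : Ideal R :=
  Ideal.span {x ^ 2, x * y, y ^ 2, x * g - y * f}

/-- The ideal of the triple line containing the double line of `(f, g)`, with further data `p` and
the coefficients `α, β, γ` of `q` as a quadratic form in `(f, g)`. -/
abbrev tripleLineIdeal (x y f g p α β γ : R) : Ideal R :=
  Ideal.span {x ^ 3, x ^ 2 * y, x * y ^ 2, y ^ 3, x * (x * g - y * f), y * (x * g - y * f),
    α * x ^ 2 + β * (x * y) + γ * y ^ 2 - p * (x * g - y * f)}

/-- `u : I_Z → R/(x, y)` takes the values prescribed by `p` and `q` on the four generators; its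
kernel will be the ideal of the triple line. -/
abbrev IsTripleLineMap (p q : R) (u : doubleLineIdeal x y f g →ₗ[R] R ⧸ Ideal.span {x, y}) : Prop :=
  u ⟨x ^ 2, Ideal.subset_span (by simp)⟩ = Ideal.Quotient.mk _ (p * f ^ 2) ∧
    u ⟨x * y, Ideal.subset_span (by simp)⟩ = Ideal.Quotient.mk _ (p * (f * g)) ∧
    u ⟨y ^ 2, Ideal.subset_span (by simp)⟩ = Ideal.Quotient.mk _ (p * g ^ 2) ∧
    u ⟨x * g - y * f, Ideal.subset_span (by simp)⟩ = Ideal.Quotient.mk _ q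

theorem mem_doubleLineIdeal_iff {m : R} :
    m ∈ doubleLineIdeal x y f g ↔
      ∃ a b c d, a * x ^ 2 + b * (x * y) + c * y ^ 2 + d * (x * g - y * f) = m := by
  simp only [Ideal.mem_span_insert, Ideal.mem_span_singleton']
  constructor
  · rintro ⟨a, _, ⟨b, _, ⟨c, _, ⟨d, rfl⟩, rfl⟩, rfl⟩, rfl⟩
    exact ⟨a, b, c, d, by ring⟩
  · rintro ⟨a, b, c, d, rfl⟩
    exact ⟨a, _, ⟨b, _, ⟨c, _, ⟨d, rfl⟩, rfl⟩, rfl⟩, by ring⟩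

/-- The generators `x², xy, y², xg - yf` of `I_Z`, as elements of `I_Z`. -/
def doubleLineGenerators (x y f g : R) : Fin 4 → doubleLineIdeal x y f g :=
  ![⟨x ^ 2, Ideal.subset_span (by simp)⟩, ⟨x * y, Ideal.subset_span (by simp)⟩,
    ⟨y ^ 2, Ideal.subset_span (by simp)⟩, ⟨x * g - y * f, Ideal.subset_span (by simp)⟩]

theorem coe_linearCombination_doubleLineGenerators (c : Fin 4 → R) :
    (Fintype.linearCombination R (doubleLineGenerators x y f g) c : R) =
      c 0 * x ^ 2 + c 1 * (x * y) + c 2 * y ^ 2 + c 3 * (x * g - y * f) := by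
  simp [Fintype.linearCombination_apply, Fin.sum_univ_four, doubleLineGenerators]

theorem span_range_doubleLineGenerators :
    Submodule.span R (Set.range (doubleLineGenerators x y f g)) = ⊤ := by
  rw [← Fintype.range_linearCombination, LinearMap.range_eq_top]
  rintro ⟨m, hm⟩
  obtain ⟨a, b, c, d, rfl⟩ := mem_doubleLineIdeal_iff.1 hm
  exact ⟨![a, b, c, d], Subtype.ext (coe_linearCombination_doubleLineGenerators _)⟩

theorem mk_coeff_of_doubleLine_syzygy (hxy : IsKoszulRegular x y)
    (hfg : IsKoszulRegular (Ideal.Quotient.mk (Ideal.span {x, y}) f)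
      (Ideal.Quotient.mk (Ideal.span {x, y}) g)) {a b c d : R}
    (h : a * x ^ 2 + b * (x * y) + c * y ^ 2 + d * (x * g - y * f) = 0) :
    Ideal.Quotient.mk (Ideal.span {x, y}) d = 0 ∧
      Ideal.Quotient.mk (Ideal.span {x, y}) (a * f ^ 2 + b * (f * g) + c * g ^ 2) = 0 := by
  set φ := Ideal.Quotient.mk (Ideal.span {x, y})
  have hx : φ x = 0 := Ideal.Quotient.eq_zero_iff_mem.2 (Ideal.subset_span (by simp))
  have hy : φ y = 0 := Ideal.Quotient.eq_zero_iff_mem.2 (Ideal.subset_span (by simp))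
  have hd : φ d = 0 := by
    obtain ⟨r, hdg, hdf⟩ := hxy.exists_of_mul_add_mul_eq_zero
      (s := a * x + b * y + d * g) (t := c * y - d * f) (by linear_combination h)
    apply hfg.eq_zero_of_mul_eq_zero
    · simpa [hx, hy] using congrArg φ hdf
    · simpa [hx, hy] using congrArg φ hdg
  refine ⟨hd, ?_⟩
  obtain ⟨d₁, d₂, rfl⟩ := Ideal.mem_span_pair.1 (Ideal.Quotient.eq_zero_iff_mem.1 hd)
  obtain ⟨s, t, ha, hb, hc⟩ := hxy.exists_of_quadratic_eq_zero
    (a := a + d₁ * g) (b := b + d₂ * g - d₁ * f) (c := c - d₂ * f) (by linear_combination h)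
  replace ha := congrArg φ ha
  replace hb := congrArg φ hb
  replace hc := congrArg φ hc
  simp only [map_add, map_sub, map_neg, map_mul, map_pow, hx, hy] at ha hb hc ⊢
  linear_combination φ f ^ 2 * ha + φ f * φ g * hb + φ g ^ 2 * hc

theorem exists_isTripleLineMap (p q : R) (hxy : IsKoszulRegular x y)
    (hfg : IsKoszulRegular (Ideal.Quotient.mk (Ideal.span {x, y}) f)
      (Ideal.Quotient.mk (Ideal.span {x, y}) g)) :
    ∃ u : doubleLineIdeal x y f g →ₗ[R] R ⧸ Ideal.span {x, y}, IsTripleLineMap p q u := by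
  let φ := Ideal.Quotient.mk (Ideal.span {x, y})
  obtain ⟨u, hu⟩ := exists_linearMap_of_ker_linearCombination_le
    (w := ![φ (p * f ^ 2), φ (p * (f * g)), φ (p * g ^ 2), φ q])
    (span_range_doubleLineGenerators (x := x) (y := y) (f := f) (g := g)) fun c hc ↦ by
      have hsyz := congrArg Subtype.val (LinearMap.mem_ker.1 hc)
      rw [coe_linearCombination_doubleLineGenerators] at hsyz
      obtain ⟨hd, habc⟩ := mk_coeff_of_doubleLine_syzygy hxy hfg hsyz
      simp only [LinearMap.mem_ker, Fintype.linearCombination_apply, Fin.sum_univ_four,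
        Algebra.smul_def, Ideal.Quotient.algebraMap_eq, Matrix.cons_val, map_add, map_mul, map_pow,
        φ] at habc ⊢
      linear_combination Ideal.Quotient.mk _ p * habc + Ideal.Quotient.mk _ q * hd
  exact ⟨u, hu 0, hu 1, hu 2, hu 3⟩

namespace IsTripleLineMap

variable {u u' : doubleLineIdeal x y f g →ₗ[R] R ⧸ Ideal.span {x, y}}

theorem unique (hu : IsTripleLineMap p q u) (hu' : IsTripleLineMap p q u') : u = u' := by
  refine LinearMap.ext_on_range span_range_doubleLineGenerators fun i ↦ ?_
  obtain ⟨h₀, h₁, h₂, h₃⟩ := hu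
  obtain ⟨h₀', h₁', h₂', h₃'⟩ := hu'
  fin_cases i
  exacts [h₀.trans h₀'.symm, h₁.trans h₁'.symm, h₂.trans h₂'.symm, h₃.trans h₃'.symm]

theorem apply_eq (hu : IsTripleLineMap p q u) {a b c d : R} {m : doubleLineIdeal x y f g}
    (hm : a * x ^ 2 + b * (x * y) + c * y ^ 2 + d * (x * g - y * f) = m) :
    u m = Ideal.Quotient.mk _ (p * (a * f ^ 2 + b * (f * g) + c * g ^ 2) + d * q) := by
  obtain ⟨h₀, h₁, h₂, h₃⟩ := hu
  have hm' : m = a • ⟨x ^ 2, Ideal.subset_span (by simp)⟩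
      + b • ⟨x * y, Ideal.subset_span (by simp)⟩ + c • ⟨y ^ 2, Ideal.subset_span (by simp)⟩
      + d • ⟨x * g - y * f, Ideal.subset_span (by simp)⟩ := Subtype.ext hm.symm
  rw [hm', map_add, map_add, map_add, map_smul, map_smul, map_smul, map_smul, h₀, h₁, h₂, h₃]
  simp only [Algebra.smul_def, Ideal.Quotient.algebraMap_eq, map_add, map_mul, map_pow]
  ring

end IsTripleLineMap

theorem tripleLineIdeal_eq_sup :
    tripleLineIdeal x y f g p α β γ =
      Ideal.span {x, y} * doubleLineIdeal x y f g ⊔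
        Ideal.span {α * x ^ 2 + β * (x * y) + γ * y ^ 2 - p * (x * g - y * f)} := by
  have hprod : Ideal.span {x, y} * doubleLineIdeal x y f g =
      Ideal.span {x ^ 3, x ^ 2 * y, x * y ^ 2, y ^ 3,
        x * (x * g - y * f), y * (x * g - y * f)} := by
    rw [Ideal.span_mul_span']
    congr 1
    ext m
    simp only [Set.mem_mul, Set.mem_insert_iff, Set.mem_singleton_iff, exists_eq_or_imp,
      exists_eq_left]
    ring_nf
    tauto
  rw [hprod, ← Ideal.span_union]
  simp only [Set.insert_union, Set.singleton_union]

theorem combination_mem_tripleLineIdeal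
    (hfg : IsKoszulRegular (Ideal.Quotient.mk (Ideal.span {x, y}) f)
      (Ideal.Quotient.mk (Ideal.span {x, y}) g))
    (hpq : IsKoszulRegular (Ideal.Quotient.mk (Ideal.span {x, y}) p)
      (Ideal.Quotient.mk (Ideal.span {x, y}) q))
    (hq : q - (α * f ^ 2 + β * (f * g) + γ * g ^ 2) ∈ Ideal.span {x, y}) {a b c d : R}
    (h : Ideal.Quotient.mk (Ideal.span {x, y})
      (p * (a * f ^ 2 + b * (f * g) + c * g ^ 2) + d * q) = 0) :
    a * x ^ 2 + b * (x * y) + c * y ^ 2 + d * (x * g - y * f) ∈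
      tripleLineIdeal x y f g p α β γ := by
  obtain ⟨e, s, t, ha, hb, hc, hd⟩ := hfg.exists_of_mul_quadratic_add_mul_eq_zero hpq
    (by simpa only [map_add, map_mul, map_pow] using Ideal.Quotient.eq.2 hq)
    (by simpa only [map_add, map_mul, map_pow] using h)
  obtain ⟨e, rfl⟩ := Ideal.Quotient.mk_surjective e
  obtain ⟨s, rfl⟩ := Ideal.Quotient.mk_surjective s
  obtain ⟨t, rfl⟩ := Ideal.Quotient.mk_surjective t
  simp only [← map_mul, ← map_add, ← map_sub, ← map_neg, Ideal.Quotient.eq] at ha hb hc hd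
  have hx : x ∈ Ideal.span {x, y} := Ideal.subset_span (by simp)
  have hy : y ∈ Ideal.span {x, y} := Ideal.subset_span (by simp)
  have hx2 : x ^ 2 ∈ doubleLineIdeal x y f g := Ideal.subset_span (by simp)
  have hxy : x * y ∈ doubleLineIdeal x y f g := Ideal.subset_span (by simp)
  have hy2 : y ^ 2 ∈ doubleLineIdeal x y f g := Ideal.subset_span (by simp)
  have hh : x * g - y * f ∈ doubleLineIdeal x y f g := Ideal.subset_span (by simp)
  rw [tripleLineIdeal_eq_sup]
  refine Submodule.mem_sup.2 ⟨_, ?_, _, Ideal.mul_mem_left _ e (Ideal.mem_span_singleton_self _),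
    sub_add_cancel _ _⟩
  convert add_mem (add_mem (add_mem (Ideal.mul_mem_mul ha hx2) (Ideal.mul_mem_mul hb hxy))
    (add_mem (Ideal.mul_mem_mul hc hy2) (Ideal.mul_mem_mul hd hh)))
    (Ideal.mul_mem_mul (add_mem (Ideal.mul_mem_left _ s hx) (Ideal.mul_mem_left _ t hy)) hh) using 1
  ring

theorem IsTripleLineMap.map_ker {u : doubleLineIdeal x y f g →ₗ[R] R ⧸ Ideal.span {x, y}}
    (hu : IsTripleLineMap p q u)
    (hfg : IsKoszulRegular (Ideal.Quotient.mk (Ideal.span {x, y}) f)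
      (Ideal.Quotient.mk (Ideal.span {x, y}) g))
    (hpq : IsKoszulRegular (Ideal.Quotient.mk (Ideal.span {x, y}) p)
      (Ideal.Quotient.mk (Ideal.span {x, y}) q))
    (hq : q - (α * f ^ 2 + β * (f * g) + γ * g ^ 2) ∈ Ideal.span {x, y}) :
    Submodule.map (doubleLineIdeal x y f g).subtype (LinearMap.ker u) =
      tripleLineIdeal x y f g p α β γ := by
  apply le_antisymm
  · rintro _ ⟨m, hm, rfl⟩
    obtain ⟨a, b, c, d, habcd⟩ := mem_doubleLineIdeal_iff.1 m.2
    rw [Submodule.subtype_apply, ← habcd]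
    exact combination_mem_tripleLineIdeal hfg hpq hq ((hu.apply_eq habcd).symm.trans hm)
  · rw [tripleLineIdeal_eq_sup]
    refine sup_le (Ideal.mul_le.2 fun r hr m hm ↦ ⟨r • ⟨m, hm⟩, ?_, rfl⟩)
      ((Ideal.span_singleton_le_iff_mem _).2 ?_)
    · obtain ⟨n, hn⟩ := Ideal.Quotient.mk_surjective (u ⟨m, hm⟩)
      rw [SetLike.mem_coe, LinearMap.mem_ker, map_smul, ← hn, Algebra.smul_def,
        Ideal.Quotient.algebraMap_eq, Ideal.Quotient.eq_zero_iff_mem.2 hr, zero_mul]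
    · have hlast : α * x ^ 2 + β * (x * y) + γ * y ^ 2 + -p * (x * g - y * f) =
          α * x ^ 2 + β * (x * y) + γ * y ^ 2 - p * (x * g - y * f) := by ring
      refine ⟨⟨_, mem_doubleLineIdeal_iff.2 ⟨α, β, γ, -p, hlast⟩⟩, ?_, rfl⟩
      rw [SetLike.mem_coe, LinearMap.mem_ker, hu.apply_eq hlast, Ideal.Quotient.eq_zero_iff_mem]
      convert Ideal.mul_mem_left _ (-p) hq using 1
      ring

theorem stmt_10_general (hxy : IsKoszulRegular x y)
    (hfg : IsKoszulRegular (Ideal.Quotient.mk (Ideal.span {x, y}) f)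
      (Ideal.Quotient.mk (Ideal.span {x, y}) g))
    (hpq : IsKoszulRegular (Ideal.Quotient.mk (Ideal.span {x, y}) p)
      (Ideal.Quotient.mk (Ideal.span {x, y}) q))
    (hq : q - (α * f ^ 2 + β * (f * g) + γ * g ^ 2) ∈ Ideal.span {x, y}) :
    ∃ u : doubleLineIdeal x y f g →ₗ[R] R ⧸ Ideal.span {x, y},
      IsTripleLineMap p q u ∧ (∀ u', IsTripleLineMap p q u' → u' = u) ∧
        LinearMap.ker u = Submodule.comap (doubleLineIdeal x y f g).subtype
          (tripleLineIdeal x y f g p α β γ) := by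
  obtain ⟨u, hu⟩ := exists_isTripleLineMap p q hxy hfg
  refine ⟨u, hu, fun u' hu' ↦ hu'.unique hu, ?_⟩
  rw [← hu.map_ker hfg hpq hq,
    Submodule.comap_map_eq_of_injective (doubleLineIdeal x y f g).injective_subtype]

end TripleLine

section Polynomial

theorem isRelPrime_X_X {σ R : Type*} [CommRing R] [IsDomain R] {i j : σ} (hij : i ≠ j) :
    IsRelPrime (X i : MvPolynomial σ R) (X j) := by
  rw [(X_prime (R := R)).irreducible.isRelPrime_iff_not_dvd, X_dvd_X]
  simpa using hij

theorem isRelPrime_of_eval_ne_zero {σ k : Type*} [Field k] [IsAlgClosed k] [Finite σ]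
    [Nontrivial σ] {f g : MvPolynomial σ k} (h : ∀ v ≠ 0, eval v f ≠ 0 ∨ eval v g ≠ 0) :
    IsRelPrime f g := by
  have hX (i : σ) : X i ∈ (Ideal.span {f, g}).radical := by
    rw [← vanishingIdeal_zeroLocus_eq_radical (K := k), mem_vanishingIdeal_iff]
    intro v hv
    have hv₀ : v = 0 := by
      by_contra hne
      exact (h v hne).elim (· (hv f (Ideal.subset_span (by simp))))
        (· (hv g (Ideal.subset_span (by simp))))
    simp [hv₀]
  intro d hdf hdg
  have hd (i : σ) : ∃ n, d ∣ (X i : MvPolynomial σ k) ^ n := by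
    obtain ⟨n, hn⟩ := hX i
    obtain ⟨a, b, hab⟩ := Ideal.mem_span_pair.1 hn
    exact ⟨n, hab ▸ dvd_add (hdf.mul_left a) (hdg.mul_left b)⟩
  obtain ⟨i, j, hij⟩ := exists_pair_ne σ
  obtain ⟨n, hn⟩ := hd i
  obtain ⟨m, hm⟩ := hd j
  exact (isRelPrime_X_X hij).pow hn hm

variable {σ τ R : Type*} [CommSemiring R] {f : σ → τ}

theorem eval_killCompl (hf : f.Injective) (v : σ → R) (s : MvPolynomial τ R) :
    eval v (killCompl hf s) = eval (f.extend v 0) s := by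
  change ((aeval v).comp (killCompl hf)) s = aeval (f.extend v 0) s
  congr 1
  ext i
  by_cases hi : ∃ a, f a = i
  · obtain ⟨a, rfl⟩ := hi
    rw [AlgHom.comp_apply, ← rename_X, killCompl_rename_app]
    simp [hf.extend_apply]
  · simp [killCompl, hi]

theorem ker_killCompl (hf : f.Injective) :
    RingHom.ker (killCompl hf : MvPolynomial τ R →ₐ[R] MvPolynomial σ R) =
      Ideal.span (X '' (Set.range f)ᶜ) := by
  ext s
  rw [mem_ideal_span_X_image, RingHom.mem_ker, MvPolynomial.ext_iff]
  simp only [coeff_killCompl, coeff_zero]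
  constructor
  · intro h m hm
    by_contra! hsupp
    have hm' : (m.comapDomain f hf.injOn).mapDomain f = m :=
      Finsupp.mapDomain_comapDomain f hf m fun i hi ↦ by
        by_contra hif
        exact Finsupp.mem_support_iff.1 hi (hsupp i hif)
    exact mem_support_iff.1 hm (hm' ▸ h _)
  · intro h m
    by_contra hm
    obtain ⟨i, hi, hne⟩ := h _ (mem_support_iff.2 hm)
    exact hne (Finsupp.mapDomain_of_notMem_range m i hi)

end Polynomial

section Line

variable {k : Type*} [Field k]

theorem injective_lineCoordinates : (![2, 3] : Fin 2 → Fin 4).Injective := by decide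

theorem ker_killCompl_lineCoordinates :
    RingHom.ker (killCompl injective_lineCoordinates :
      MvPolynomial (Fin 4) k →ₐ[k] MvPolynomial (Fin 2) k) = Ideal.span {X 0, X 1} := by
  have hcompl : (Set.range ![2, 3])ᶜ = ({0, 1} : Set (Fin 4)) := by
    ext i
    fin_cases i <;> simp
  rw [ker_killCompl, hcompl, Set.image_pair]

theorem eval_killCompl_lineCoordinates (v : Fin 2 → k) (s : MvPolynomial (Fin 4) k) :
    eval v (killCompl injective_lineCoordinates s) = eval ![0, 0, v 0, v 1] s := by
  have hv : Function.extend ![2, 3] v 0 = ![0, 0, v 0, v 1] := by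
    funext i
    fin_cases i
    · exact Function.extend_apply' _ _ _ (by decide)
    · exact Function.extend_apply' _ _ _ (by decide)
    · exact injective_lineCoordinates.extend_apply v 0 0
    · exact injective_lineCoordinates.extend_apply v 0 1
  rw [eval_killCompl, hv]

theorem NoCommonZerosAlongY.isKoszulRegular [IsAlgClosed k] {f g : MvPolynomial (Fin 4) k}
    (h : NoCommonZerosAlongY f g) :
    IsKoszulRegular (Ideal.Quotient.mk (Ideal.span {X 0, X 1}) f)
      (Ideal.Quotient.mk (Ideal.span {X 0, X 1}) g) := by
  have hrel : IsRelPrime (killCompl injective_lineCoordinates f)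
      (killCompl injective_lineCoordinates g) := by
    refine isRelPrime_of_eval_ne_zero fun v hv ↦ ?_
    rw [eval_killCompl_lineCoordinates, eval_killCompl_lineCoordinates]
    refine h (v 0) (v 1) fun hv₀ ↦ hv ?_
    ext i
    fin_cases i
    exacts [congrArg Prod.fst hv₀, congrArg Prod.snd hv₀]
  rw [← ker_killCompl_lineCoordinates]
  have hsurj : Function.Surjective (killCompl (R := k) injective_lineCoordinates) :=
    fun s ↦ ⟨rename ![2, 3] s, killCompl_rename_app _ s⟩
  exact .of_ringEquiv (Ideal.quotientKerAlgEquivOfSurjective hsurj).toRingEquiv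
    (.of_isRelPrime hrel)

end Line

/-- for `a, b ≥ 0`, `f, g` homogeneous of degree `a+1` and `p, q`
homogeneous of degrees `b, 3a+b+2`, each pair with no common zeros along `Y`, and
`α, β, γ` homogeneous with `q ≡ αf² + βfg + γg² (mod (x,y))`, there is a unique
`S`-module homomorphism `u : I_Z → S/(x,y)` with `u(x²) = p̄f̄², u(xy) = p̄f̄ḡ,
u(y²) = p̄ḡ², u(xg−yf) = q̄`, and its kernel is exactly
`(x³, x²y, xy², y³, x(xg−yf), y(xg−yf), αx² + βxy + γy² − p(xg−yf))`. -/
theorem stmt_10 {k : Type*} [Field k] [IsAlgClosed k] (a b : ℕ)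
    (f g p q α β γ : MvPolynomial (Fin 4) k)
    (hf : f.IsHomogeneous (a + 1)) (hg : g.IsHomogeneous (a + 1))
    (hp : p.IsHomogeneous b) (hq : q.IsHomogeneous (3 * a + b + 2))
    (hfg : NoCommonZerosAlongY f g) (hpq : NoCommonZerosAlongY p q)
    (dα dβ dγ : ℕ) (hα : α.IsHomogeneous dα) (hβ : β.IsHomogeneous dβ)
    (hγ : γ.IsHomogeneous dγ)
    (hqcong : q - (α * f ^ 2 + β * (f * g) + γ * g ^ 2)
      ∈ (Ideal.span {X 0, X 1} : Ideal (MvPolynomial (Fin 4) k))) :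
    ∃ u : (Ideal.span {X 0 ^ 2, X 0 * X 1, X 1 ^ 2, X 0 * g - X 1 * f} :
          Ideal (MvPolynomial (Fin 4) k)) →ₗ[MvPolynomial (Fin 4) k]
        (MvPolynomial (Fin 4) k ⧸ (Ideal.span {X 0, X 1} : Ideal (MvPolynomial (Fin 4) k))),
      (u ⟨X 0 ^ 2, Ideal.subset_span (by simp)⟩ = Ideal.Quotient.mk _ (p * f ^ 2) ∧
        u ⟨X 0 * X 1, Ideal.subset_span (by simp)⟩ = Ideal.Quotient.mk _ (p * (f * g)) ∧
        u ⟨X 1 ^ 2, Ideal.subset_span (by simp)⟩ = Ideal.Quotient.mk _ (p * g ^ 2) ∧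
        u ⟨X 0 * g - X 1 * f, Ideal.subset_span (by simp)⟩ = Ideal.Quotient.mk _ q) ∧
      (∀ u' : (Ideal.span {X 0 ^ 2, X 0 * X 1, X 1 ^ 2, X 0 * g - X 1 * f} :
            Ideal (MvPolynomial (Fin 4) k)) →ₗ[MvPolynomial (Fin 4) k]
          (MvPolynomial (Fin 4) k ⧸ (Ideal.span {X 0, X 1} : Ideal (MvPolynomial (Fin 4) k))),
        (u' ⟨X 0 ^ 2, Ideal.subset_span (by simp)⟩ = Ideal.Quotient.mk _ (p * f ^ 2) ∧
          u' ⟨X 0 * X 1, Ideal.subset_span (by simp)⟩ = Ideal.Quotient.mk _ (p * (f * g)) ∧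
          u' ⟨X 1 ^ 2, Ideal.subset_span (by simp)⟩ = Ideal.Quotient.mk _ (p * g ^ 2) ∧
          u' ⟨X 0 * g - X 1 * f, Ideal.subset_span (by simp)⟩ = Ideal.Quotient.mk _ q) →
        u' = u) ∧
      LinearMap.ker u = Submodule.comap
        (Submodule.subtype (Ideal.span {X 0 ^ 2, X 0 * X 1, X 1 ^ 2, X 0 * g - X 1 * f} :
          Ideal (MvPolynomial (Fin 4) k)))
        (Ideal.span {X 0 ^ 3, X 0 ^ 2 * X 1, X 0 * X 1 ^ 2, X 1 ^ 3,
          X 0 * (X 0 * g - X 1 * f), X 1 * (X 0 * g - X 1 * f),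
          α * X 0 ^ 2 + β * (X 0 * X 1) + γ * X 1 ^ 2 - p * (X 0 * g - X 1 * f)}) :=
  stmt_10_general (.of_isRelPrime (isRelPrime_X_X (by decide))) hfg.isKoszulRegular
    hpq.isKoszulRegular hqcong
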